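/- Let A be the ring of integers of a global function field, i.e. the integral closure of F_q[t] in a finite field extension K of F_q(t), where F_q is a finite field. Let G be a finite subgroup of GL_2(A) acting linearly on R = A[X,Y] (fixing A). Then the ring of invariants R^G is Cohen-Macaulay. -/

import Mathlib

/-- A Noetherian local ring is Cohen–Macaulay if it admits a regular sequence, consisting of
elements of the maximal ideal, whose length equals the Krull dimension of the ring. -/
def IsCohenMacaulayLocalRing (R : Type*) [CommRing R] [IsLocalRing R] : Prop :=
  ∃ (n : ℕ) (rs : List R), ringKrullDim R = n ∧ rs.length = n ∧
    (∀ x ∈ rs, x ∈ IsLocalRing.maximalIdeal R) ∧ RingTheory.Sequence.IsRegular R rs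

/-- A Noetherian ring is Cohen–Macaulay if all its localizations at prime ideals are
Cohen–Macaulay local rings. -/
def IsCohenMacaulayRing (R : Type*) [CommRing R] : Prop :=
  IsNoetherianRing R ∧
    ∀ (P : Ideal R) (_ : P.IsPrime), IsCohenMacaulayLocalRing (Localization.AtPrime P)

/-- The ring of invariants `R^G` of a subgroup `G ⊆ GL_n(A)` acting linearly on the
polynomial ring `R = A[X_1, …, X_n]` (fixing `A`), via the standard action of `GL_n(A)`
on the `A`-span of `X_1, …, X_n`. -/
noncomputable def glInvariants {A : Type*} [CommRing A] {n : ℕ}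
    (G : Subgroup (Matrix.GeneralLinearGroup (Fin n) A)) :
    Subalgebra A (MvPolynomial (Fin n) A) where
  carrier := {f | ∀ g ∈ G,
    MvPolynomial.aeval
      (fun i => ∑ j, ((g : Matrix (Fin n) (Fin n) A) i j) • MvPolynomial.X j) f = f}
  mul_mem' := by
    intro a b ha hb g hg
    rw [map_mul, ha g hg, hb g hg]
  add_mem' := by
    intro a b ha hb g hg
    rw [map_add, ha g hg, hb g hg]
  algebraMap_mem' := fun a g _ => MvPolynomial.aeval_C _ a

/-!
Over a field `k` contained in `A`, take `H ≤ G` trivial in characteristic zero and a Sylow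
`p`-subgroup in characteristic `p`. The index of `H` in `G` is then invertible, so the relative
Reynolds operator retracts `R^H` onto `R^G`; since `R` is integral over `R^G` with group `G`, going
down holds for `R^G → R^H`, and depth and dimension descend along the retraction. So it suffices
that `R^H` is Cohen–Macaulay, and in fact it is regular: `H` has determinant one and fixes a nonzero
vector `v`. At a prime of the Dedekind domain `A`, the vector `v` may be rescaled to be unimodular
and completed to a basis. In this basis `H` acts on `R = D[X]`, where `D` is a polynomial ring in
one variable, by translations `X ↦ X + d` with `d` in a finite additive subgroup `V` of `D`, whence
the invariants are `D[N]` for the single polynomial `N = ∏ (X + d)`.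

That `A` is Dedekind, although `K` may be inseparable over `F_q(t)`, comes from the finiteness of
the Frobenius endomorphism of `F_q[t]`.
-/

section DepthAtLeast

open IsLocalRing RingTheory.Sequence

/-- The `I`-depth of the module `M` is at least `n`: some sequence of `n` elements of `I` is weakly
regular on `M`. Weak regularity is used, so that the depth is infinite when `M = I • M`. -/
def DepthAtLeast {R : Type*} [CommRing R] (I : Ideal R) (M : Type*) [AddCommGroup M] [Module R M]
    (n : ℕ) : Prop :=
  ∃ rs : List R, rs.length = n ∧ (∀ r ∈ rs, r ∈ I) ∧ IsWeaklyRegular M rs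

theorem DepthAtLeast.mono {R M : Type*} [CommRing R] {I : Ideal R} [AddCommGroup M] [Module R M]
    {m n : ℕ} (h : DepthAtLeast I M n) (hmn : m ≤ n) : DepthAtLeast I M m := by
  obtain ⟨rs, hlen, hmem, hrs⟩ := h
  rw [← List.take_append_drop m rs, isWeaklyRegular_append_iff] at hrs
  exact ⟨rs.take m, by simp [hlen, hmn], fun r hr ↦ hmem r (List.mem_of_mem_take hr), hrs.1⟩

theorem isCohenMacaulayLocalRing_iff_depthAtLeast {R : Type*} [CommRing R] [IsLocalRing R] :
    IsCohenMacaulayLocalRing R ↔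
      ∃ n : ℕ, ringKrullDim R = n ∧ DepthAtLeast (maximalIdeal R) R n := by
  constructor
  · rintro ⟨n, rs, hdim, hlen, hmem, hrs⟩
    exact ⟨n, hdim, rs, hlen, hmem, hrs.toIsWeaklyRegular⟩
  · rintro ⟨n, hdim, rs, hlen, hmem, hrs⟩
    exact ⟨n, rs, hdim, hlen, hmem,
      (isRegular_iff_isWeaklyRegular_of_subset_maximalIdeal hmem).2 hrs⟩

end DepthAtLeast

section RegularLocalRing

open IsLocalRing RingTheory.Sequence

theorem exists_span_insert_erase_eq {R M : Type*} [CommRing R] [IsLocalRing R] [AddCommGroup M]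
    [Module R M] [DecidableEq M] {s : Finset M} {x : M} (hx : x ∈ Submodule.span R (s : Set M))
    (hx' : x ∉ maximalIdeal R • Submodule.span R (s : Set M)) :
    ∃ a ∈ s, Submodule.span R (insert x (s.erase a) : Set M) = Submodule.span R s := by
  obtain ⟨c, -, hc⟩ := Submodule.mem_span_finset.1 hx
  obtain ⟨a, ha, hunit⟩ : ∃ a ∈ s, IsUnit (c a) := by
    by_contra! hcon
    refine hx' (hc ▸ Submodule.sum_mem _ fun a ha ↦ ?_)
    exact Submodule.smul_mem_smul ((mem_maximalIdeal _).2 (hcon a ha))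
      (Submodule.subset_span ha)
  have hrest : ∑ b ∈ s.erase a, c b • b ∈ Submodule.span R (s.erase a : Set M) :=
    Submodule.sum_mem _ fun b hb ↦ Submodule.smul_mem _ _ (Submodule.subset_span hb)
  refine ⟨a, ha, le_antisymm (Submodule.span_le.2 ?_) (Submodule.span_le.2 fun b hb ↦ ?_)⟩
  · exact Set.insert_subset hx
      ((Finset.coe_subset.2 (s.erase_subset a)).trans Submodule.subset_span)
  · by_cases hba : b = a
    · have hax : c a • a ∈ Submodule.span R (insert x (s.erase a) : Set M) := by
        rw [eq_sub_of_add_eq ((Finset.add_sum_erase s _ ha).trans hc)]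
        exact Submodule.sub_mem _ (Submodule.subset_span (Set.mem_insert _ _))
          (Submodule.span_mono (Set.subset_insert _ _) hrest)
      rw [hba]
      exact (Submodule.smul_mem_iff_of_isUnit _ hunit).1 hax
    · exact Submodule.subset_span (Or.inr (Finset.mem_erase.2 ⟨hba, hb⟩))

variable {R : Type*} [CommRing R]

theorem spanFinrank_maximalIdeal_quotient_add_one_le [IsLocalRing R] [IsNoetherianRing R] {x : R}
    [IsLocalRing (R ⧸ Ideal.span {x})] (hx : x ∈ maximalIdeal R) (hx2 : x ∉ maximalIdeal R ^ 2) :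
    (maximalIdeal (R ⧸ Ideal.span {x})).spanFinrank + 1 ≤ (maximalIdeal R).spanFinrank := by
  classical
  obtain ⟨s, hcard, hs⟩ :=
    (IsNoetherian.noetherian (maximalIdeal R)).exists_span_finset_card_eq_spanFinrank
  obtain ⟨a, ha, hspan⟩ := exists_span_insert_erase_eq (hs.symm ▸ hx)
    (by rwa [hs, smul_eq_mul, ← pow_two])
  have hmax : maximalIdeal (R ⧸ Ideal.span {x}) =
      Submodule.span _ (Ideal.Quotient.mk (Ideal.span {x}) '' (s.erase a)) := by
    rw [← map_maximalIdeal_of_surjective _ Ideal.Quotient.mk_surjective, ← hs, ← hspan]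
    refine (Ideal.map_span _ _).trans ?_
    rw [Set.image_insert_eq, Ideal.Quotient.eq_zero_iff_mem.2 (Ideal.mem_span_singleton_self x)]
    exact Submodule.span_insert_zero
  rw [hmax, ← hcard, ← Finset.card_erase_add_one ha]
  gcongr
  refine (Submodule.spanFinrank_span_le_ncard_of_finite (Set.toFinite _)).trans ?_
  exact (Set.ncard_image_le (Finset.finite_toSet _)).trans (Set.ncard_coe_finset _).le

theorem isRegularLocalRing_quotient_span_singleton [IsRegularLocalRing R] {x : R}
    (hx : x ∈ maximalIdeal R) (hx2 : x ∉ maximalIdeal R ^ 2) :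
    IsRegularLocalRing (R ⧸ Ideal.span {x}) := by
  have : Nontrivial (R ⧸ Ideal.span {x}) := Ideal.Quotient.nontrivial_iff.2
    (ne_top_of_le_ne_top (maximalIdeal.isMaximal R).ne_top
      ((Ideal.span_singleton_le_iff_mem _).2 hx))
  have : IsLocalRing (R ⧸ Ideal.span {x}) :=
    .of_surjective' (Ideal.Quotient.mk _) Ideal.Quotient.mk_surjective
  refine IsRegularLocalRing.of_spanFinrank_maximalIdeal_le _ ?_
  have hdim := Ideal.height_le_ringKrullDim_quotient_add_one (p := maximalIdeal R) hx
  rw [maximalIdeal_height_eq_ringKrullDim,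
    ← IsRegularLocalRing.spanFinrank_maximalIdeal (R := R)] at hdim
  have hrank : ((maximalIdeal (R ⧸ Ideal.span {x})).spanFinrank + 1 : WithBot ℕ∞) ≤
      (maximalIdeal R).spanFinrank := by
    exact_mod_cast spanFinrank_maximalIdeal_quotient_add_one_le hx hx2
  exact ENat.WithBot.add_le_add_one_right_iff.1 (hrank.trans hdim)

theorem exists_mem_maximalIdeal_notMem_sq_notMem_minimalPrimes [IsLocalRing R] [IsNoetherianRing R]
    (h : maximalIdeal R ∉ minimalPrimes R) :
    ∃ x ∈ maximalIdeal R, x ∉ maximalIdeal R ^ 2 ∧ ∀ q ∈ minimalPrimes R, x ∉ q := by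
  by_contra! hcon
  have hcover : (maximalIdeal R : Set R) ⊆
      ⋃ I ∈ insert (maximalIdeal R ^ 2) (minimalPrimes R), ((id I : Ideal R) : Set R) := by
    intro x hx
    by_cases hx2 : x ∈ maximalIdeal R ^ 2
    · exact Set.mem_biUnion (Set.mem_insert _ _) hx2
    · obtain ⟨q, hq, hxq⟩ := hcon x hx hx2
      exact Set.mem_biUnion (Set.mem_insert_of_mem _ hq) hxq
  obtain ⟨I, rfl | hI, hle⟩ := (Ideal.subset_union_prime_finite
    ((minimalPrimes.finite_of_isNoetherianRing R).insert _) (maximalIdeal R ^ 2)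
    (maximalIdeal R ^ 2) fun I hI hne _ ↦ (hI.resolve_left hne).1.1).1 hcover
  · have hbot : maximalIdeal R = ⊥ :=
      Submodule.eq_bot_of_le_smul_of_le_jacobson_bot (maximalIdeal R) _
        (IsNoetherian.noetherian _) (by simpa [pow_two] using hle) (maximalIdeal_le_jacobson _)
    exact h ⟨⟨inferInstance, bot_le⟩, fun _ _ _ ↦ hbot ▸ bot_le⟩
  · exact h (le_antisymm (le_maximalIdeal hI.1.1.ne_top) hle ▸ hI)

theorem isDomain_of_isPrime_span_singleton [IsLocalRing R] [IsNoetherianRing R] {x : R}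
    (hx : x ∈ maximalIdeal R) (hxq : ∀ q ∈ minimalPrimes R, x ∉ q)
    (hprime : (Ideal.span {x}).IsPrime) : IsDomain R := by
  obtain ⟨q, hq, hqx⟩ := Ideal.exists_minimalPrimes_le (bot_le (a := Ideal.span {x}))
  have : q.IsPrime := hq.1.1
  have hle : q ≤ maximalIdeal R • q := by
    intro y hy
    obtain ⟨a, rfl⟩ := Ideal.mem_span_singleton'.1 (hqx hy)
    have ha : a ∈ q := (Ideal.IsPrime.mem_or_mem ‹_› hy).resolve_right (hxq q hq)
    exact mul_comm x a ▸ Submodule.smul_mem_smul hx ha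
  obtain rfl : q = ⊥ := Submodule.eq_bot_of_le_smul_of_le_jacobson_bot (maximalIdeal R) _
    (IsNoetherian.noetherian _) hle (maximalIdeal_le_jacobson _)
  exact IsDomain.of_bot_isPrime R

theorem isDomain_of_isRegularLocalRing (R : Type*) [CommRing R] [IsRegularLocalRing R] :
    IsDomain R := by
  induction hn : (maximalIdeal R).spanFinrank using Nat.strong_induction_on generalizing R with
  | _ n ih =>
    by_cases hmin : maximalIdeal R ∈ minimalPrimes R
    · have hdim : ringKrullDim R = 0 := by
        rw [← maximalIdeal_height_eq_ringKrullDim, Ideal.height_eq_zero_iff.2 hmin]; rfl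
      rw [← IsRegularLocalRing.spanFinrank_maximalIdeal, Nat.cast_eq_zero,
        Submodule.spanFinrank_eq_zero_iff_eq_bot (IsNoetherian.noetherian _)] at hdim
      exact (isField_iff_maximalIdeal_eq.2 hdim).isDomain
    · obtain ⟨x, hx, hx2, hxq⟩ := exists_mem_maximalIdeal_notMem_sq_notMem_minimalPrimes hmin
      have := isRegularLocalRing_quotient_span_singleton hx hx2
      have hlt := spanFinrank_maximalIdeal_quotient_add_one_le hx hx2
      have := ih _ (by omega) (R ⧸ Ideal.span {x}) rfl
      exact isDomain_of_isPrime_span_singleton hx hxq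
        ((Ideal.Quotient.isDomain_iff_prime _).1 this)

theorem IsCohenMacaulayLocalRing.of_quotient_span_singleton [IsLocalRing R] [IsNoetherianRing R]
    {x : R} [IsLocalRing (R ⧸ Ideal.span {x})] (hx : x ∈ maximalIdeal R) (hreg : IsSMulRegular R x)
    (h : IsCohenMacaulayLocalRing (R ⧸ Ideal.span {x})) : IsCohenMacaulayLocalRing R := by
  obtain ⟨n, hdim, rs, hlen, hmem, hrs⟩ := isCohenMacaulayLocalRing_iff_depthAtLeast.1 h
  obtain ⟨rs, rfl⟩ := List.map_surjective_iff.2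
    (Ideal.Quotient.mk_surjective (I := Ideal.span {x})) rs
  have hlocal : IsLocalHom (Ideal.Quotient.mk (Ideal.span {x})) :=
    IsLocalHom.of_surjective _ Ideal.Quotient.mk_surjective
  refine isCohenMacaulayLocalRing_iff_depthAtLeast.2 ⟨n + 1, ?_, x :: rs, by simpa using hlen,
    List.forall_mem_cons.2 ⟨hx, fun r hr ↦ ?_⟩, ?_⟩
  · rw [← ringKrullDim_quotient_span_singleton_succ_eq_ringKrullDim hreg hx, hdim, Nat.cast_succ]
  · rw [← maximalIdeal_comap (Ideal.Quotient.mk (Ideal.span {x}))]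
    exact hmem _ (List.mem_map_of_mem hr)
  · let e : QuotSMulTop x R ≃ₗ[R] R ⧸ Ideal.span {x} :=
      Submodule.quotEquivOfEq _ _ (by simp [← Submodule.ideal_span_singleton_smul])
    rw [isWeaklyRegular_cons_iff, e.isWeaklyRegular_congr]
    exact ⟨hreg, (isWeaklyRegular_map_algebraMap_iff (R ⧸ Ideal.span {x}) _ rs).1 hrs⟩

theorem isCohenMacaulayLocalRing_of_isRegularLocalRing (R : Type*) [CommRing R]
    [IsRegularLocalRing R] : IsCohenMacaulayLocalRing R := by
  induction hn : (maximalIdeal R).spanFinrank using Nat.strong_induction_on generalizing R with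
  | _ n ih =>
    have := isDomain_of_isRegularLocalRing R
    by_cases hsq : maximalIdeal R ≤ maximalIdeal R ^ 2
    · have hbot : maximalIdeal R = ⊥ :=
        Submodule.eq_bot_of_le_smul_of_le_jacobson_bot (maximalIdeal R) _
          (IsNoetherian.noetherian _) (by simpa [pow_two] using hsq) (maximalIdeal_le_jacobson _)
      refine isCohenMacaulayLocalRing_iff_depthAtLeast.2 ⟨0, ?_, [], rfl, by simp, .nil R R⟩
      simp [← IsRegularLocalRing.spanFinrank_maximalIdeal (R := R), hbot]
    · obtain ⟨x, hx, hx2⟩ := SetLike.not_le_iff_exists.1 hsq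
      have := isRegularLocalRing_quotient_span_singleton hx hx2
      have hlt := spanFinrank_maximalIdeal_quotient_add_one_le hx hx2
      have hx0 : x ≠ 0 := fun h ↦ hx2 (h ▸ zero_mem _)
      exact .of_quotient_span_singleton hx (.of_ne_zero hx0) (ih _ (by omega) _ rfl)

theorem isCohenMacaulayRing_of_isRegularRing (R : Type*) [CommRing R] [IsRegularRing R] :
    IsCohenMacaulayRing R :=
  ⟨inferInstance, fun _ _ ↦ isCohenMacaulayLocalRing_of_isRegularLocalRing _⟩

end RegularLocalRing

section Depth

open IsLocalRing RingTheory.Sequence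

universe u

open CategoryTheory Abelian Limits in
theorem subsingleton_linearMap_quotient_ofList {R : Type u} [CommRing R] (N : ModuleCat.{u} R)
    {rs : List R} {M : ModuleCat.{u} R} (hrs : IsWeaklyRegular M rs)
    (hext : ∀ j ≤ rs.length, Subsingleton (Ext N M j)) :
    Subsingleton (N →ₗ[R] (M ⧸ (Ideal.ofList rs • ⊤ : Submodule R M))) := by
  induction rs generalizing M with
  | nil =>
    have : Subsingleton (N ⟶ M) := Ext.addEquiv₀.subsingleton_congr.mp (hext 0 le_rfl)
    have : Subsingleton (N →ₗ[R] M) := ModuleCat.homAddEquiv.symm.subsingleton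
    exact ((Submodule.quotEquivOfEqBot _ (by simp)).congrRight (M := N)).toEquiv.subsingleton
  | cons x rs ih =>
    rw [isWeaklyRegular_cons_iff] at hrs
    have : Subsingleton (N →ₗ[R] (QuotSMulTop x M ⧸
        (Ideal.ofList rs • ⊤ : Submodule R (QuotSMulTop x M)))) := by
      refine ih (M := ModuleCat.of R (QuotSMulTop x M)) hrs.2 fun i hi ↦ ?_
      rw [List.length_cons] at hext
      have hzero := AddCommGrpCat.isZero_of_iff_subsingleton.mpr (hext i (by omega))
      have hzero' := AddCommGrpCat.isZero_of_iff_subsingleton.mpr (hext (i + 1) (by omega))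
      exact AddCommGrpCat.subsingleton_of_isZero <| ShortComplex.Exact.isZero_of_both_zeros
        (Ext.covariant_sequence_exact₃' N hrs.1.smulShortComplex_shortExact i (i + 1) rfl)
        (hzero.eq_zero_of_src _) (hzero'.eq_zero_of_tgt _)
    exact ((Submodule.quotOfListConsSMulTopEquivQuotSMulTopInner M x rs).congrRight
      (M := N)).toEquiv.subsingleton

theorem DepthAtLeast.maximalIdeal_notMem_associatedPrimes {R : Type u} [CommRing R] [IsLocalRing R]
    [IsNoetherianRing R] {n : ℕ} (h : DepthAtLeast (maximalIdeal R) R n) {rs : List R}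
    (hrs : IsWeaklyRegular R rs) (hlt : rs.length < n) :
    maximalIdeal R ∉ associatedPrimes R (R ⧸ Ideal.ofList rs) := by
  obtain ⟨ys, rfl, hmem, hys⟩ := h
  have hext := ModuleCat.subsingleton_ext_of_exists_isRegular (maximalIdeal R)
    (ModuleCat.of R (R ⧸ maximalIdeal R))
    (by rw [Module.support_eq_zeroLocus, Ideal.annihilator_quotient]) (ModuleCat.of R R)
    (by simpa [lt_top_iff_ne_top] using (maximalIdeal.isMaximal R).ne_top) ys hmem
    ((isRegular_iff_isWeaklyRegular_of_subset_maximalIdeal hmem).2 hys)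
  have hsub := subsingleton_linearMap_quotient_ofList (ModuleCat.of R (R ⧸ maximalIdeal R))
    (M := ModuleCat.of R R) hrs fun j hj ↦ hext j (hj.trans_lt hlt)
  intro hass
  obtain ⟨-, f, hf⟩ := (isAssociatedPrime_iff_exists_injective_linearMap _ _).1 hass
  let e : (R ⧸ Ideal.ofList rs) ≃ₗ[R] R ⧸ (Ideal.ofList rs • ⊤ : Submodule R R) :=
    Submodule.quotEquivOfEq _ _ (by simp)
  have hzero : e.toLinearMap ∘ₗ f = 0 := hsub.elim _ _
  exact zero_ne_one (hf (e.injective ((LinearMap.congr_fun hzero 0).trans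
    (LinearMap.congr_fun hzero 1).symm)))

theorem DepthAtLeast.notMem_associatedPrimes_of_localization {S : Type u} [CommRing S]
    [IsNoetherianRing S] {Q : Ideal S} [Q.IsPrime] {n : ℕ}
    (h : DepthAtLeast (maximalIdeal (Localization.AtPrime Q)) (Localization.AtPrime Q) n)
    {rs : List S} (hrs : IsWeaklyRegular S rs) (hlt : rs.length < n) :
    Q ∉ associatedPrimes S (S ⧸ Ideal.ofList rs) := by
  intro hass
  open Module.associatedPrimes in
  have hmax := mem_associatedPrimes_of_comap_mem_associatedPrimes_of_isLocalizedModule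
    Q.primeCompl ((Ideal.ofList rs).toLocalizedQuotient' (Localization.AtPrime Q) Q.primeCompl
      (Algebra.linearMap S (Localization.AtPrime Q))) (maximalIdeal (Localization.AtPrime Q))
    (by rwa [← Ideal.under_def, Localization.AtPrime.under_maximalIdeal])
  rw [Ideal.localized'_eq_map, Ideal.map_ofList] at hmax
  exact h.maximalIdeal_notMem_associatedPrimes
    (hrs.of_isLocalization (Localization.AtPrime Q) Q.primeCompl) (by simpa using hlt) hmax

variable {B S : Type*} [CommRing B] [CommRing S] [Algebra B S]

theorem exists_isSMulRegular_of_comap_associatedPrimes_ne [IsLocalRing B] [IsNoetherianRing S]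
    {M : Type*} [AddCommGroup M] [Module S M] [Module.Finite S M] [Module B M]
    [IsScalarTower B S M]
    (h : ∀ Q ∈ associatedPrimes S M, Q.comap (algebraMap B S) ≠ maximalIdeal B) :
    ∃ r ∈ maximalIdeal B, IsSMulRegular M r := by
  by_contra! hcon
  have hcover : (maximalIdeal B : Set B) ⊆
      ⋃ Q ∈ associatedPrimes S M, (Q.comap (algebraMap B S) : Ideal B) := by
    intro r hr
    have hr' : algebraMap B S r ∈ ⋃ Q ∈ associatedPrimes S M, (Q : Set S) := by
      rw [biUnion_associatedPrimes_eq_compl_regular]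
      exact fun hreg ↦ hcon r hr ((isSMulRegular_algebraMap_iff _).1 hreg)
    simpa using hr'
  obtain ⟨Q, hQ, hle⟩ := (Ideal.subset_union_prime_finite (associatedPrimes.finite S M) ⊥ ⊥
    fun Q hQ _ _ ↦ (IsAssociatedPrime.isPrime hQ).comap _).1 hcover
  exact h Q hQ ((maximalIdeal.isMaximal B).eq_of_le
    ((IsAssociatedPrime.isPrime hQ).comap (algebraMap B S)).ne_top hle).symm

theorem depthAtLeast_of_localization [IsLocalRing B] [IsNoetherianRing S] {n : ℕ}
    (h : ∀ (Q : Ideal S) [Q.IsPrime], Q.comap (algebraMap B S) = maximalIdeal B →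
      DepthAtLeast (maximalIdeal (Localization.AtPrime Q)) (Localization.AtPrime Q) n) :
    DepthAtLeast (maximalIdeal B) S n := by
  suffices ∀ i ≤ n, DepthAtLeast (maximalIdeal B) S i from this n le_rfl
  intro i hi
  induction i with
  | zero => exact ⟨[], rfl, by simp, .nil B S⟩
  | succ i ih =>
    obtain ⟨rs, hlen, hmem, hrs⟩ := ih (by omega)
    obtain ⟨r, hr, hreg⟩ : ∃ r ∈ maximalIdeal B,
        IsSMulRegular (S ⧸ Ideal.ofList (rs.map (algebraMap B S))) r := by
      refine exists_isSMulRegular_of_comap_associatedPrimes_ne (S := S) fun Q hQ hQB ↦ ?_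
      have := IsAssociatedPrime.isPrime hQ
      exact (h Q hQB).notMem_associatedPrimes_of_localization
        ((isWeaklyRegular_map_algebraMap_iff S S rs).2 hrs) (by simp; omega) hQ
    let e : (S ⧸ (Ideal.ofList (rs.map (algebraMap B S)) • ⊤ : Ideal S)) ≃ₗ[S]
        S ⧸ Ideal.ofList (rs.map (algebraMap B S)) := Submodule.quotEquivOfEq _ _ (by simp)
    refine ⟨rs ++ [r], by simp [hlen], ?_, ?_⟩
    · simpa [or_imp, forall_and] using ⟨hmem, hr⟩
    · rw [← isWeaklyRegular_map_algebraMap_iff S S, List.map_append, isWeaklyRegular_append_iff,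
        isWeaklyRegular_map_algebraMap_iff, List.map_singleton, isWeaklyRegular_singleton_iff,
        e.isSMulRegular_congr, isSMulRegular_algebraMap_iff]
      exact ⟨hrs, hreg⟩

theorem DepthAtLeast.of_retract {I : Ideal B} {n : ℕ} (h : DepthAtLeast I S n) (ρ : S →ₗ[B] B)
    (hρ : ρ 1 = 1) : DepthAtLeast I B n := by
  obtain ⟨rs, hlen, hmem, hrs⟩ := h
  refine ⟨rs, hlen, hmem, (isWeaklyRegular_iff _ _).2 fun i hi ↦ ?_⟩
  have hS := (isWeaklyRegular_iff _ _).1 hrs i hi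
  rw [isSMulRegular_quotient_iff_mem_of_smul_mem] at hS ⊢
  intro x hx
  have hSx : algebraMap B S x ∈ (Ideal.ofList (rs.take i) • ⊤ : Submodule B S) := by
    refine hS _ ?_
    have hmap := Submodule.mem_map_of_mem (f := Algebra.linearMap B S) hx
    rw [Submodule.map_smul'', map_smul] at hmap
    exact Submodule.smul_mono le_rfl le_top hmap
  have hρx : ρ (algebraMap B S x) = x := by
    rw [Algebra.algebraMap_eq_smul_one, map_smul, hρ, smul_eq_mul, mul_one]
  have hmap := Submodule.mem_map_of_mem (f := ρ) hSx
  rw [Submodule.map_smul'', hρx] at hmap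
  exact Submodule.smul_mono le_rfl le_top hmap

end Depth

section Retract

open IsLocalRing RingTheory.Sequence

theorem IsCohenMacaulayLocalRing.of_ringEquiv {R R' : Type*} [CommRing R] [IsLocalRing R]
    [CommRing R'] [IsLocalRing R'] (h : IsCohenMacaulayLocalRing R) (e : R ≃+* R') :
    IsCohenMacaulayLocalRing R' := by
  obtain ⟨n, rs, hdim, hlen, hmem, hrs⟩ := h
  refine ⟨n, rs.map e, (ringKrullDim_eq_of_ringEquiv e).symm.trans hdim, by simpa using hlen,
    List.forall_mem_map.2 fun r hr ↦ ?_, ?_⟩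
  · rw [← map_ringEquiv_maximalIdeal e]
    exact Ideal.mem_map_of_mem _ (hmem r hr)
  · refine (e.toAddEquiv.isRegular_congr ?_).1 hrs
    rw [List.forall₂_map_right_iff]
    exact List.forall₂_same.2 fun r _ x ↦ map_mul e r x

theorem exists_retraction_localization {B S : Type*} [CommRing B] [CommRing S] [Algebra B S]
    (ρ : S →ₗ[B] B) (hρ : ρ 1 = 1) (P : Ideal B) [P.IsPrime] :
    ∃ ρ' : Localization (Algebra.algebraMapSubmonoid S P.primeCompl) →ₗ[Localization.AtPrime P]
      Localization.AtPrime P, ρ' 1 = 1 := by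
  have : IsLocalizedModule P.primeCompl (IsScalarTower.toAlgHom B S
      (Localization (Algebra.algebraMapSubmonoid S P.primeCompl))).toLinearMap :=
    isLocalizedModule_iff_isLocalization.2 inferInstance
  refine ⟨IsLocalizedModule.mapExtendScalars P.primeCompl
    (IsScalarTower.toAlgHom B S _).toLinearMap
    (Algebra.linearMap B (Localization.AtPrime P)) (Localization.AtPrime P) ρ, ?_⟩
  simpa [hρ] using IsLocalizedModule.map_apply P.primeCompl (IsScalarTower.toAlgHom B S
    (Localization (Algebra.algebraMapSubmonoid S P.primeCompl))).toLinearMap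
    (Algebra.linearMap B (Localization.AtPrime P)) ρ 1

theorem IsCohenMacaulayRing.depthAtLeast_of_height_le {S : Type*} [CommRing S]
    (h : IsCohenMacaulayRing S) {n : ℕ} (Q : Ideal S) [Q.IsPrime] (hn : n ≤ Q.height)
    (T : Type*) [CommRing T] [IsLocalRing T] [Algebra S T] [IsLocalization.AtPrime T Q] :
    DepthAtLeast (maximalIdeal T) T n := by
  obtain ⟨m, hdim, hm⟩ := isCohenMacaulayLocalRing_iff_depthAtLeast.1 <|
    (h.2 Q inferInstance).of_ringEquiv
      (IsLocalization.algEquiv Q.primeCompl (Localization.AtPrime Q) T).toRingEquiv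
  rw [IsLocalization.AtPrime.ringKrullDim_eq_height Q] at hdim
  have hheight : Q.height = m := by exact_mod_cast hdim
  exact hm.mono (by exact_mod_cast hheight ▸ hn)

theorem IsCohenMacaulayRing.of_retract {B S : Type*} [CommRing B] [IsNoetherianRing B] [CommRing S]
    [Algebra B S] [Algebra.HasGoingDown B S] (hS : IsCohenMacaulayRing S)
    (ρ : S →ₗ[B] B) (hρ : ρ 1 = 1) : IsCohenMacaulayRing B := by
  refine ⟨inferInstance, fun P _ ↦ ?_⟩
  have : IsNoetherianRing S := hS.1
  let B' := Localization.AtPrime P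
  let S' := Localization (Algebra.algebraMapSubmonoid S P.primeCompl)
  have : IsNoetherianRing S' := IsLocalization.isNoetherianRing
    (Algebra.algebraMapSubmonoid S P.primeCompl) S' inferInstance
  obtain ⟨n, hn⟩ := ENat.ne_top_iff_exists.1 P.height_ne_top_of_isPrime
  obtain ⟨ρ', hρ'⟩ := exists_retraction_localization ρ hρ P
  refine isCohenMacaulayLocalRing_iff_depthAtLeast.2 ⟨n, ?_, .of_retract ?_ ρ' hρ'⟩
  · rw [IsLocalization.AtPrime.ringKrullDim_eq_height P, ← hn]
    rfl
  refine depthAtLeast_of_localization fun Q' _ hQ' ↦ ?_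
  let Q := Q'.comap (algebraMap S S')
  have : IsLocalization.AtPrime (Localization.AtPrime Q') Q :=
    IsLocalization.isLocalization_isLocalization_atPrime_isLocalization
      (Algebra.algebraMapSubmonoid S P.primeCompl) _ Q'
  have : Q.LiesOver P := by
    constructor
    rw [Ideal.under_def, Ideal.comap_comap, ← IsScalarTower.algebraMap_eq B S S',
      IsScalarTower.algebraMap_eq B B' S', ← Ideal.comap_comap, hQ']
    exact (IsLocalization.AtPrime.under_maximalIdeal B' P).symm
  refine hS.depthAtLeast_of_height_le Q ?_ (Localization.AtPrime Q')
  rw [hn, Ideal.height_eq_height_add_of_liesOver_of_hasGoingDown P Q]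
  exact le_self_add

end Retract

section Invariants

open scoped Pointwise in
theorem hasGoingDown_of_isInvariant {B S R : Type*} (G : Type*) [CommRing B] [CommRing S]
    [CommRing R] [Algebra B S] [Algebra B R] [Algebra S R] [IsScalarTower B S R]
    [FaithfulSMul B R] [FaithfulSMul S R] [Group G] [Finite G] [MulSemiringAction G R]
    [SMulCommClass G B R] [Algebra.IsInvariant B R G] : Algebra.HasGoingDown B S := by
  have : Algebra.IsIntegral B R := Algebra.IsInvariant.isIntegral B R G
  have : Algebra.IsIntegral S R := Algebra.IsIntegral.tower_top (R := B)
  refine ⟨fun {p} _ Q _ hlt ↦ ?_⟩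
  obtain ⟨⟨QR, _, hQR⟩⟩ := Q.nonempty_primesOver (S := R)
  obtain ⟨⟨P₁, _, _⟩⟩ := p.nonempty_primesOver (S := R)
  have hP₁ : P₁.comap (algebraMap B R) ≤ Q.under B := (Ideal.over_def P₁ p).symm.le.trans hlt.le
  obtain ⟨P₂, hle, _, hP₂⟩ := Ideal.exists_ideal_over_prime_of_isIntegral (Q.under B) P₁ hP₁
  obtain ⟨g, rfl⟩ := Algebra.IsInvariant.exists_smul_of_under_eq B R G P₂ QR <| by
    rw [Ideal.under_def, hP₂, Ideal.over_def QR Q, Ideal.under_under]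
  refine ⟨(g • P₁).under S, ?_, inferInstance, inferInstance⟩
  rw [Ideal.over_def (g • P₂) Q]
  exact Ideal.comap_mono (Ideal.pointwise_smul_le_pointwise_smul_iff.2 hle)

theorem quotient_out_smul_eq {G M : Type*} [Group G] [MulAction G M] {H : Subgroup G} {x : M}
    (hx : ∀ h ∈ H, h • x = x) (g : G) : (g : G ⧸ H).out • x = g • x := by
  obtain ⟨h, hh⟩ := QuotientGroup.mk_out_eq_mul H g
  rw [hh, mul_smul, hx _ h.2]

theorem smul_sum_quotient_out_smul {G M : Type*} [Group G] [AddCommMonoid M]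
    [DistribMulAction G M] {H : Subgroup G} [Fintype (G ⧸ H)] {x : M} (hx : ∀ h ∈ H, h • x = x)
    (g : G) : g • ∑ c : G ⧸ H, c.out • x = ∑ c : G ⧸ H, c.out • x := by
  have hout (c : G ⧸ H) : g • c.out • x = (g • c).out • x := by
    rw [← mul_smul, ← quotient_out_smul_eq hx (g * c.out), ← smul_eq_mul g c.out,
      MulAction.Quotient.coe_smul_out]
  simp_rw [Finset.smul_sum, hout]
  exact Equiv.sum_comp (MulAction.toPerm g) fun c : G ⧸ H ↦ c.out • x

-- The retraction is the relative Reynolds operator: the trace over `G ⧸ H`, divided by the index.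
theorem exists_retraction_of_isUnit_index {B S R G : Type*} [CommRing B] [CommRing S]
    [CommRing R] [Algebra B S] [Algebra B R] [Algebra S R] [IsScalarTower B S R]
    [FaithfulSMul B R] [Group G] [MulSemiringAction G R] [SMulCommClass G B R]
    [Algebra.IsInvariant B R G] {H : Subgroup G} [H.FiniteIndex]
    (hH : ∀ h ∈ H, ∀ s : S, h • algebraMap S R s = algebraMap S R s)
    (hu : IsUnit (H.index : B)) : ∃ ρ : S →ₗ[B] B, ρ 1 = 1 := by
  have := Fintype.ofFinite (G ⧸ H)
  let T : S →ₗ[B] R := ∑ c : G ⧸ H, DistribSMul.toLinearMap B R c.out ∘ₗ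
    (IsScalarTower.toAlgHom B S R).toLinearMap
  have hT (s : S) : T s = ∑ c : G ⧸ H, c.out • algebraMap S R s := by simp [T]
  have hrange (s : S) : T s ∈ LinearMap.range (Algebra.linearMap B R) := by
    refine Algebra.IsInvariant.isInvariant (G := G) _ fun g ↦ ?_
    rw [hT]
    exact smul_sum_quotient_out_smul (fun h hh ↦ hH h hh s) g
  let e := LinearEquiv.ofInjective (Algebra.linearMap B R) (FaithfulSMul.algebraMap_injective B R)
  have h1 : e.symm (T.codRestrict _ hrange 1) = H.index := by
    rw [LinearEquiv.symm_apply_eq]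
    refine Subtype.ext (?_ : T 1 = algebraMap B R H.index)
    simp [hT, H.index_eq_card, Nat.card_eq_fintype_card]
  refine ⟨((hu.unit⁻¹ : Bˣ) : B) • (e.symm.toLinearMap ∘ₗ T.codRestrict _ hrange), ?_⟩
  simp [h1]

theorem IsCohenMacaulayRing.of_isUnit_index {B S R G : Type*} [CommRing B] [IsNoetherianRing B]
    [CommRing S] [CommRing R] [Algebra B S] [Algebra B R] [Algebra S R]
    [IsScalarTower B S R] [FaithfulSMul B R] [FaithfulSMul S R] [Group G] [Finite G]
    [MulSemiringAction G R] [SMulCommClass G B R] [Algebra.IsInvariant B R G] {H : Subgroup G}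
    (hS : IsCohenMacaulayRing S)
    (hH : ∀ h ∈ H, ∀ s : S, h • algebraMap S R s = algebraMap S R s)
    (hu : IsUnit (H.index : B)) : IsCohenMacaulayRing B := by
  have := hasGoingDown_of_isInvariant (B := B) (S := S) (R := R) G
  obtain ⟨ρ, hρ⟩ := exists_retraction_of_isUnit_index hH hu
  exact hS.of_retract ρ hρ

end Invariants

section LinearSubst

open MvPolynomial Matrix

variable {A : Type*} [CommRing A] {n : ℕ}

/-- The linear substitution `X i ↦ ∑ j, M i j • X j`. Matrices act on the right: see
`linearSubst_mul`. -/
noncomputable def linearSubst (M : Matrix (Fin n) (Fin n) A) :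
    MvPolynomial (Fin n) A →ₐ[A] MvPolynomial (Fin n) A :=
  aeval fun i ↦ ∑ j, M i j • X j

@[simp]
theorem linearSubst_X (M : Matrix (Fin n) (Fin n) A) (i : Fin n) :
    linearSubst M (X i) = ∑ j, M i j • X j :=
  aeval_X _ i

theorem linearSubst_one : linearSubst (1 : Matrix (Fin n) (Fin n) A) = AlgHom.id A _ := by
  ext1 i
  simp [Matrix.one_apply]

theorem linearSubst_mul (M N : Matrix (Fin n) (Fin n) A) :
    linearSubst (M * N) = (linearSubst N).comp (linearSubst M) := by
  ext1 i
  simp only [linearSubst_X, AlgHom.comp_apply, map_sum, map_smul, Matrix.mul_apply,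
    Finset.sum_smul, Finset.smul_sum, smul_smul]
  exact Finset.sum_comm

theorem glInvariants_anti {G H : Subgroup (GL (Fin n) A)} (hHG : H ≤ G) :
    glInvariants G ≤ glInvariants H :=
  fun _ hf h hh ↦ hf h (hHG hh)

/-- The left action of `GL (Fin n) A` on polynomials whose invariants are `glInvariants`. The
inverse turns the right action by substitutions into a left action. -/
noncomputable abbrev glAction : MulSemiringAction (GL (Fin n) A) (MvPolynomial (Fin n) A) where
  smul g f := linearSubst (g⁻¹ : GL (Fin n) A).1 f
  one_smul f := by
    change linearSubst (1⁻¹ : GL (Fin n) A).1 f = f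
    rw [inv_one, Units.val_one, linearSubst_one, AlgHom.id_apply]
  mul_smul g h f := by
    change linearSubst ((g * h)⁻¹ : GL (Fin n) A).1 f = linearSubst _ (linearSubst _ f)
    rw [_root_.mul_inv_rev, Units.val_mul, linearSubst_mul, AlgHom.comp_apply]
  smul_zero _ := map_zero _
  smul_add _ _ _ := map_add _ _ _
  smul_one _ := map_one _
  smul_mul _ _ _ := map_mul _ _ _

attribute [local instance] glAction

theorem gl_smul_def (g : GL (Fin n) A) (f : MvPolynomial (Fin n) A) :
    g • f = linearSubst (g⁻¹ : GL (Fin n) A).1 f :=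
  rfl

theorem mem_glInvariants_iff_smul {G : Subgroup (GL (Fin n) A)} {f : MvPolynomial (Fin n) A} :
    f ∈ glInvariants G ↔ ∀ g : G, g • f = f := by
  refine ⟨fun hf g ↦ hf _ (inv_mem g.2), fun hf g hg ↦ ?_⟩
  simpa [Subgroup.smul_def, gl_smul_def] using! hf (⟨g, hg⟩ : G)⁻¹

theorem isInvariant_glInvariants (G : Subgroup (GL (Fin n) A)) :
    Algebra.IsInvariant (glInvariants G) (MvPolynomial (Fin n) A) G :=
  ⟨fun f hf ↦ ⟨⟨f, mem_glInvariants_iff_smul.2 hf⟩, rfl⟩⟩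

theorem smulCommClass_glInvariants (G : Subgroup (GL (Fin n) A)) :
    SMulCommClass G (glInvariants G) (MvPolynomial (Fin n) A) where
  smul_comm g b f := by
    rw [Algebra.smul_def, Algebra.smul_def, smul_mul']
    exact congrArg (· * g • f) (mem_glInvariants_iff_smul.1 b.2 g)

theorem finite_glInvariants (G : Subgroup (GL (Fin n) A)) [Finite G] :
    Module.Finite (glInvariants G) (MvPolynomial (Fin n) A) := by
  have := isInvariant_glInvariants G
  have := smulCommClass_glInvariants G
  have := Algebra.IsInvariant.isIntegral (glInvariants G) (MvPolynomial (Fin n) A) G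
  have := Algebra.FiniteType.of_restrictScalars_finiteType A (glInvariants G)
    (MvPolynomial (Fin n) A)
  exact Algebra.IsIntegral.finite

theorem isNoetherianRing_glInvariants [IsNoetherianRing A] (G : Subgroup (GL (Fin n) A))
    [Finite G] : IsNoetherianRing (glInvariants G) := by
  have := finite_glInvariants G
  have : Algebra.FiniteType A (glInvariants G) :=
    ⟨fg_of_fg_of_fg A (glInvariants G) (MvPolynomial (Fin n) A) Algebra.FiniteType.out
      Module.Finite.fg_top Subtype.val_injective⟩
  exact Algebra.FiniteType.isNoetherianRing A _

theorem isCohenMacaulayRing_glInvariants_of_isUnit_relIndex [IsNoetherianRing A]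
    {G H : Subgroup (GL (Fin n) A)} [Finite G] (hHG : H ≤ G) (hu : IsUnit (H.relIndex G : A))
    (hH : IsCohenMacaulayRing (glInvariants H)) : IsCohenMacaulayRing (glInvariants G) := by
  have := isInvariant_glInvariants G
  have := smulCommClass_glInvariants G
  have := isNoetherianRing_glInvariants G
  let _ : Algebra (glInvariants G) (glInvariants H) :=
    (Subalgebra.inclusion (glInvariants_anti hHG)).toAlgebra
  have : IsScalarTower (glInvariants G) (glInvariants H) (MvPolynomial (Fin n) A) :=
    .of_algebraMap_eq fun _ ↦ rfl
  refine hH.of_isUnit_index (R := MvPolynomial (Fin n) A) (H := H.subgroupOf G)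
    (fun h hh s ↦ mem_glInvariants_iff_smul.1 s.2 ⟨h, hh⟩) ?_
  rw [← map_natCast (algebraMap A (glInvariants G))]
  exact hu.map _

end LinearSubst

section Translation

open Polynomial

variable {D : Type*} [CommRing D]

/-- The monic polynomial `∏ (X + v)` over a finite additive subgroup `V` of a ring, that is, the
product of the orbit of `X` under the translations by `V`. -/
noncomputable def translationNorm (V : AddSubgroup D) [Fintype V] : D[X] :=
  ∏ v : V, (X + C (v : D))

theorem monic_translationNorm (V : AddSubgroup D) [Fintype V] : (translationNorm V).Monic :=
  monic_prod_of_monic _ _ fun _ _ ↦ monic_X_add_C _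

theorem natDegree_translationNorm [Nontrivial D] (V : AddSubgroup D) [Fintype V] :
    (translationNorm V).natDegree = Fintype.card V := by
  rw [translationNorm, natDegree_prod_of_monic _ _ fun _ _ ↦ monic_X_add_C _]
  simp

theorem taylor_translationNorm {V : AddSubgroup D} [Fintype V] {v : D} (hv : v ∈ V) :
    taylor v (translationNorm V) = translationNorm V := by
  rw [translationNorm, taylor_apply, prod_comp,
    ← Equiv.prod_comp (Equiv.addLeft (⟨v, hv⟩ : V)) fun w : V ↦ X + C (w : D)]
  simp [add_assoc]

theorem taylor_comp_translationNorm {V : AddSubgroup D} [Fintype V] {v : D} (hv : v ∈ V)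
    (q : D[X]) : taylor v (q.comp (translationNorm V)) = q.comp (translationNorm V) := by
  rw [taylor_apply, comp_assoc, ← taylor_apply, taylor_translationNorm hv]

theorem taylor_divByMonic_and_modByMonic {N f : D[X]} {v : D} (hmonic : N.Monic)
    (hN : taylor v N = N) (hf : taylor v f = f) :
    taylor v (f /ₘ N) = f /ₘ N ∧ taylor v (f %ₘ N) = f %ₘ N := by
  nontriviality D
  have hsum : taylor v (f %ₘ N) + N * taylor v (f /ₘ N) = f := by
    conv_rhs => rw [← hf, ← modByMonic_add_div f N, map_add, taylor_mul, hN]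
  obtain ⟨hdiv, hmod⟩ := div_modByMonic_unique _ _ hmonic
    ⟨hsum, by simpa only [degree_taylor] using degree_modByMonic_lt f hmonic⟩
  exact ⟨hdiv.symm, hmod.symm⟩

theorem compRingHom_translationNorm_injective [Nontrivial D] [NoZeroDivisors D] (V : AddSubgroup D)
    [Fintype V] : Function.Injective (compRingHom (translationNorm V)) := by
  refine (injective_iff_map_eq_zero _).2 fun p hp ↦ ?_
  refine (comp_eq_zero_iff.1 hp).resolve_right fun ⟨_, hC⟩ ↦ ?_
  have hdeg := natDegree_translationNorm V
  rw [hC, natDegree_C] at hdeg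
  exact Fintype.card_ne_zero hdeg.symm

variable [IsDomain D] {V : AddSubgroup D} [Fintype V]

theorem eq_C_of_taylor_eq_of_natDegree_lt {f : D[X]} (hf : ∀ v ∈ V, taylor v f = f)
    (hdeg : f.natDegree < Fintype.card V) : f = C (f.eval 0) := by
  refine sub_eq_zero.1 (eq_zero_of_natDegree_lt_card_of_eval_eq_zero _
    (Subtype.val_injective (p := (· ∈ V))) (fun v ↦ ?_) (by rwa [natDegree_sub_C]))
  have hv := taylor_eval v.1 f 0
  rw [hf v v.2, zero_add] at hv
  rw [eval_sub, eval_C, hv, sub_self]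

theorem exists_comp_translationNorm_eq {f : D[X]} (hf : ∀ v ∈ V, taylor v f = f) :
    ∃ q : D[X], q.comp (translationNorm V) = f := by
  induction hn : f.natDegree using Nat.strong_induction_on generalizing f with
  | _ n ih =>
    have hpos : 0 < Fintype.card V := Fintype.card_pos
    by_cases hlt : f.natDegree < Fintype.card V
    · exact ⟨C (f.eval 0), by rw [C_comp, ← eq_C_of_taylor_eq_of_natDegree_lt hf hlt]⟩
    have hmonic := monic_translationNorm V
    have hdeg := natDegree_translationNorm V
    have hdivmod (v : D) (hv : v ∈ V) :=
      taylor_divByMonic_and_modByMonic hmonic (taylor_translationNorm hv) (hf v hv)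
    obtain ⟨q, hq⟩ := ih (f.natDegree - Fintype.card V) (by omega) (fun v hv ↦ (hdivmod v hv).1)
      (by rw [natDegree_divByMonic f hmonic, hdeg])
    have hmod := eq_C_of_taylor_eq_of_natDegree_lt (fun v hv ↦ (hdivmod v hv).2) <|
      hdeg ▸ natDegree_modByMonic_lt f hmonic fun h ↦ by simp [h] at hdeg; omega
    refine ⟨C ((f %ₘ translationNorm V).eval 0) + X * q, ?_⟩
    rw [add_comp, mul_comp, C_comp, X_comp, hq, ← hmod, modByMonic_add_div]

end Translation

section TranslationInvariants

theorem isRegularLocalRing_localization_of_forall_exists_eq_pow_mul {D S : Type*} [CommRing D]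
    [IsRegularRing D] [CommRing S] {φ : D →+* S} (hφ : Function.Injective φ) {d : D}
    (hd : ∀ f : S, ∃ (k : ℕ) (p : D), φ p = φ d ^ k * f) (Q : Ideal S) [Q.IsPrime]
    (hQ : φ d ∉ Q) : IsRegularLocalRing (Localization.AtPrime Q) := by
  have hpow (k : ℕ) : φ d ^ k ∉ Q := fun h ↦ hQ (Ideal.IsPrime.mem_of_pow_mem ‹_› k h)
  have hmul {k : ℕ} {p : D} {t : S} (ht : t ∉ Q) (hp : φ p = φ d ^ k * t) : p ∉ Q.comap φ :=
    fun h ↦ (Ideal.IsPrime.mem_or_mem ‹_› (hp ▸ h : φ d ^ k * t ∈ Q)).elim (hpow k) ht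
  let alg : Algebra D (Localization.AtPrime Q) :=
    ((algebraMap S (Localization.AtPrime Q)).comp φ).toAlgebra
  have hloc : IsLocalization.AtPrime (Localization.AtPrime Q) (Q.comap φ) := by
    refine (isLocalization_iff _ _).2 ⟨fun p ↦ ?_, fun z ↦ ?_, fun {p q} hpq ↦ ?_⟩
    · exact IsLocalization.map_units (Localization.AtPrime Q) (⟨φ p, p.2⟩ : Q.primeCompl)
    · obtain ⟨⟨f, t⟩, hft⟩ := IsLocalization.surj Q.primeCompl z
      obtain ⟨k, p, hp⟩ := hd f
      obtain ⟨l, q, hq⟩ := hd t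
      have hkq : φ (d ^ k * q) = φ d ^ (k + l) * t := by simp [hq, pow_add, mul_assoc]
      refine ⟨(d ^ l * p, ⟨d ^ k * q, hmul t.2 hkq⟩), ?_⟩
      change z * algebraMap S _ (φ (d ^ k * q)) = algebraMap S _ (φ (d ^ l * p))
      rw [map_mul φ, map_mul φ, hp, hq]
      simp only [map_mul, map_pow] at hft ⊢
      rw [← hft]
      ring
    · obtain ⟨t, ht⟩ := IsLocalization.exists_of_eq (M := Q.primeCompl)
        (hpq : algebraMap S (Localization.AtPrime Q) (φ p) = algebraMap S _ (φ q))
      obtain ⟨l, u, hu⟩ := hd t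
      exact ⟨⟨u, hmul t.2 hu⟩, hφ (by simp [hu, mul_assoc, ht])⟩
  exact .of_ringEquiv (IsLocalization.algEquiv (Q.comap φ).primeCompl
    (Localization.AtPrime (Q.comap φ)) (Localization.AtPrime Q)).toRingEquiv

open Polynomial

variable {D P G : Type*} [CommRing D] [CommRing P] [Group G] [MulSemiringAction G P]

/-- The translations of the variable of `D[X]` that the action of `G` on `P` induces through
`E : D[X] →+* P`. -/
def translationSubgroup (G : Type*) [Group G] [MulSemiringAction G P] (E : D[X] →+* P) :
    AddSubgroup D where
  carrier := {v | ∃ g : G, ∀ p, g • E p = E (taylor v p)}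
  zero_mem' := ⟨1, fun p ↦ by rw [one_smul, taylor_zero]⟩
  add_mem' := by
    rintro v w ⟨g, hg⟩ ⟨h, hh⟩
    exact ⟨g * h, fun p ↦ by rw [mul_smul, hh, hg, taylor_taylor]⟩
  neg_mem' := by
    rintro v ⟨g, hg⟩
    exact ⟨g⁻¹, fun p ↦ by rw [inv_smul_eq_iff, hg, taylor_taylor, add_neg_cancel, taylor_zero]⟩

theorem finite_translationSubgroup [Finite G] {E : D[X] →+* P} (hE : Function.Injective E) :
    Finite (translationSubgroup G E) := by
  choose g hg using fun v : translationSubgroup G E ↦ v.2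
  refine Finite.of_injective g fun v w hvw ↦ ?_
  have hX : taylor (v : D) X = taylor (w : D) X := hE (by rw [← hg v, hvw, hg w])
  rw [taylor_X, taylor_X] at hX
  exact Subtype.ext (C_injective (add_left_cancel hX))

theorem isRegularLocalRing_localization_of_forall_exists_smul_eq_taylor {A : Type*} [CommRing A]
    [Algebra A P] {S : Subalgebra A P} [Finite G] [IsDomain D] [IsRegularRing D]
    (hS : ∀ f, f ∈ S ↔ ∀ g : G, g • f = f) {E : D[X] →+* P} (hE : Function.Injective E)
    (htaylor : ∀ g : G, ∃ v, ∀ p, g • E p = E (taylor v p)) {d : D} {a : A}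
    (had : E (C d) = algebraMap A P a) (hd : ∀ f : P, ∃ (k : ℕ) (p : D[X]), E p = a ^ k • f)
    (Q : Ideal S) [Q.IsPrime] (hQ : algebraMap A S a ∉ Q) :
    IsRegularLocalRing (Localization.AtPrime Q) := by
  have := finite_translationSubgroup (G := G) hE
  have := Fintype.ofFinite (translationSubgroup G E)
  let N := translationNorm (translationSubgroup G E)
  have hmem (p : D[X]) : E.comp (compRingHom N) p ∈ S := by
    refine (hS _).2 fun g ↦ ?_
    obtain ⟨v, hv⟩ := htaylor g
    have hvV : v ∈ translationSubgroup G E := ⟨g, hv⟩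
    rw [RingHom.comp_apply, hv, coe_compRingHom_apply, taylor_comp_translationNorm hvV]
  let φ : D[X] →+* S := (E.comp (compRingHom N)).codRestrict S hmem
  have hφ (p : D[X]) : (φ p : P) = E (p.comp N) := rfl
  have hφd : φ (C d) = algebraMap A S a := Subtype.ext (by rw [hφ, C_comp, had]; rfl)
  refine isRegularLocalRing_localization_of_forall_exists_eq_pow_mul (φ := φ) (d := C d) ?_
    (fun f ↦ ?_) Q (hφd ▸ hQ)
  · exact RingHom.injective_codRestrict.2 (hE.comp (compRingHom_translationNorm_injective _))
  · obtain ⟨k, p, hp⟩ := hd f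
    have hfix (g : G) : g • (a ^ k • (f : P)) = a ^ k • (f : P) := (hS _).1 (a ^ k • f).2 g
    obtain ⟨q, rfl⟩ := exists_comp_translationNorm_eq (V := translationSubgroup G E) (f := p) <| by
      rintro v ⟨g, hg⟩
      exact hE (by rw [← hg, hp, hfix])
    refine ⟨k, q, Subtype.ext ?_⟩
    rw [hφ, hp, hφd, ← map_pow, ← Algebra.smul_def]
    rfl

end TranslationInvariants

section Unipotent

open MvPolynomial Matrix

variable {A : Type*} [CommRing A] {n : ℕ}

theorem exists_linearSubst_eq_det_pow_smul (M : Matrix (Fin n) (Fin n) A)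
    (f : MvPolynomial (Fin n) A) :
    ∃ (k : ℕ) (p : MvPolynomial (Fin n) A), linearSubst M p = M.det ^ k • f := by
  induction f using MvPolynomial.induction_on with
  | C a => exact ⟨0, C a, by simp [linearSubst, algebraMap_eq]⟩
  | add f g hf hg =>
    obtain ⟨k, p, hp⟩ := hf
    obtain ⟨l, q, hq⟩ := hg
    refine ⟨k + l, M.det ^ l • p + M.det ^ k • q, ?_⟩
    rw [map_add, map_smul, map_smul, hp, hq, smul_smul, smul_smul, ← pow_add, ← pow_add,
      add_comm l k, smul_add]
  | mul_X f i hf =>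
    obtain ⟨k, p, hp⟩ := hf
    have hX : linearSubst M (linearSubst M.adjugate (X i)) = M.det • X i := by
      rw [← AlgHom.comp_apply, ← linearSubst_mul, adjugate_mul]
      simp [Matrix.one_apply]
    refine ⟨k + 1, p * linearSubst M.adjugate (X i), ?_⟩
    rw [map_mul, hp, hX, smul_mul_smul_comm, pow_succ]

theorem map_linearSubst {B : Type*} [CommRing B] (φ : A →+* B) (M : Matrix (Fin n) (Fin n) A)
    (f : MvPolynomial (Fin n) A) :
    map φ (linearSubst M f) = linearSubst (M.map φ) (map φ f) := by
  induction f using MvPolynomial.induction_on with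
  | C a => simp [linearSubst, algebraMap_eq]
  | add f g hf hg => simp [hf, hg]
  | mul_X f i hf => simp [hf, smul_eq_C_mul]

theorem linearSubst_injective [IsDomain A] {M : Matrix (Fin n) (Fin n) A} (hM : M.det ≠ 0) :
    Function.Injective (linearSubst M) := by
  let K := FractionRing A
  have hunit : IsUnit (M.map (algebraMap A K)).det := by
    have hdet := (map_ne_zero_iff _ (IsFractionRing.injective A K)).2 hM
    rw [RingHom.map_det] at hdet
    exact hdet.isUnit
  intro f g hfg
  refine map_injective _ (IsFractionRing.injective A K) ?_
  have hinv (q : MvPolynomial (Fin n) K) :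
      linearSubst (M.map (algebraMap A K))⁻¹ (linearSubst (M.map (algebraMap A K)) q) = q := by
    rw [← AlgHom.comp_apply, ← linearSubst_mul, mul_nonsing_inv _ hunit, linearSubst_one,
      AlgHom.id_apply]
  rw [← hinv (map _ f), ← map_linearSubst, hfg, map_linearSubst, hinv]

theorem finSuccEquiv_linearSubst_transvection (c : A) (f : MvPolynomial (Fin 2) A) :
    finSuccEquiv A 1 (linearSubst (transvection 0 1 c) f) =
      Polynomial.taylor (c • X 0) (finSuccEquiv A 1 f) := by
  have h1 : finSuccEquiv A 1 (X 1) = Polynomial.C (X 0) := finSuccEquiv_X_succ (j := 0)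
  have hcomp : (finSuccEquiv A 1).toAlgHom.comp (linearSubst (transvection 0 1 c)) =
      ((Polynomial.taylorAlgHom (c • X 0)).restrictScalars A).comp
        (finSuccEquiv A 1).toAlgHom := by
    refine algHom_ext (Fin.forall_fin_two.2 ⟨?_, ?_⟩)
    · simp [Fin.sum_univ_two, transvection, Polynomial.smul_C, h1, finSuccEquiv_X_zero]
    · simp [Fin.sum_univ_two, transvection, h1]
  exact DFunLike.congr_fun hcomp f

end Unipotent

section FixedVector

open MvPolynomial Matrix

variable {A : Type*} [CommRing A]

-- For the ideal `I` spanned by the entries of `v` and `I * J = (v i)`, some `b ∈ J` does not map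
-- `I` into `v i • p`; then `b / v i` rescales `v` to an integral vector with an entry outside `p`.
theorem exists_smul_eq_smul_notMem [IsDedekindDomain A] {ι : Type*} {v : ι → A} (hv : v ≠ 0)
    {p : Ideal A} (hp : p ≠ ⊤) :
    ∃ (a b : A) (w : ι → A) (i : ι), a ≠ 0 ∧ a • w = b • v ∧ w i ∉ p := by
  obtain ⟨i, hi⟩ := Function.ne_iff.1 hv
  have hmem (k : ι) : v k ∈ Ideal.span (Set.range v) := Ideal.subset_span ⟨k, rfl⟩
  obtain ⟨J, hJ⟩ := Ideal.dvd_span_singleton.2 (hmem i)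
  suffices ∃ b ∈ J, ∃ k, ¬ ∃ x ∈ p, v i * x = b * v k by
    obtain ⟨b, hb, k, hk⟩ := this
    have hdvd (l : ι) : v i ∣ b * v l :=
      Ideal.mem_span_singleton.1 (hJ ▸ mul_comm b (v l) ▸ Ideal.mul_mem_mul (hmem l) hb)
    choose w hw using hdvd
    exact ⟨v i, b, w, k, hi, funext fun l ↦ (hw l).symm, fun hwk ↦ hk ⟨w k, hwk, (hw k).symm⟩⟩
  by_contra! hall
  have hle : Ideal.span {v i} ≤ Ideal.span {v i} * p := by
    conv_lhs => rw [hJ, mul_comm]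
    refine Ideal.mul_le.2 fun b hb x hx ↦ ?_
    induction hx using Submodule.span_induction with
    | mem _ hx =>
      obtain ⟨k, rfl⟩ := hx
      exact Ideal.mem_span_singleton_mul.2 (hall b hb k)
    | zero => simp
    | add x y _ _ hx hy => rw [mul_add]; exact add_mem hx hy
    | smul c x _ hx => rw [smul_eq_mul, mul_left_comm]; exact Ideal.mul_mem_left _ _ hx
  obtain ⟨x, hx, hvx⟩ := Ideal.mem_span_singleton_mul.1 (hle (Ideal.mem_span_singleton_self _))
  exact hp ((Ideal.eq_top_iff_one p).2 (mul_left_cancel₀ hi (hvx.trans (mul_one _).symm) ▸ hx))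

theorem det_smul_eq_det_smul_add_det_smul (r w x : Fin 2 → A) :
    (of ![r, w]).det • x = (of ![x, w]).det • r + (of ![r, x]).det • w := by
  ext i
  fin_cases i <;> simp [det_fin_two] <;> ring

-- Scaling the first row by the determinant makes the coefficient of the transvection integral, by
-- Cramer's rule.
theorem exists_mul_eq_transvection_mul {h : Matrix (Fin 2) (Fin 2) A} (hdet : h.det = 1)
    {w : Fin 2 → A} (hw : w ᵥ* h = w) (r : Fin 2 → A) :
    ∃ c, of ![(of ![r, w]).det • r, w] * h =
      transvection 0 1 c * of ![(of ![r, w]).det • r, w] := by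
  have hrows (x y : Fin 2 → A) : of ![x, y] * h = of ![x ᵥ* h, y ᵥ* h] := by
    ext i j
    fin_cases i <;> rfl
  have hd : (of ![r ᵥ* h, w]).det = (of ![r, w]).det := by
    rw [← mul_one (of ![r, w]).det, ← hdet, ← det_mul, hrows, hw]
  refine ⟨(of ![r, r ᵥ* h]).det, ?_⟩
  rw [hrows, hw, smul_vecMul, det_smul_eq_det_smul_add_det_smul r w, hd]
  ext i j
  fin_cases i
  · simp
  · simp

theorem isRegularLocalRing_localization_of_forall_mul_eq_transvection_mul [IsDomain A]
    [IsRegularRing A] {H : Subgroup (GL (Fin 2) A)} [Finite H] {M : Matrix (Fin 2) (Fin 2) A}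
    (hM : ∀ h ∈ H, ∃ c, M * (h : Matrix (Fin 2) (Fin 2) A) = transvection 0 1 c * M)
    (Q : Ideal (glInvariants H)) [Q.IsPrime] (hQ : algebraMap A (glInvariants H) M.det ∉ Q) :
    IsRegularLocalRing (Localization.AtPrime Q) := by
  let _ := glAction (A := A) (n := 2)
  have hdet : M.det ≠ 0 := fun h ↦ hQ (by rw [h, map_zero]; exact Q.zero_mem)
  let E : Polynomial (MvPolynomial (Fin 1) A) →+* MvPolynomial (Fin 2) A :=
    (linearSubst M).toRingHom.comp (finSuccEquiv A 1).symm
  have hE : Function.Injective E :=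
    (linearSubst_injective hdet).comp (finSuccEquiv A 1).symm.injective
  have hEapply (p) : E p = linearSubst M ((finSuccEquiv A 1).symm p) := rfl
  refine isRegularLocalRing_localization_of_forall_exists_smul_eq_taylor (G := H) (d := C M.det)
    (fun f ↦ mem_glInvariants_iff_smul) hE (fun g ↦ ?_) ?_ (fun f ↦ ?_) Q hQ
  · obtain ⟨c, hc⟩ := hM _ (inv_mem g.2)
    refine ⟨c • X 0, fun p ↦ ?_⟩
    have hT := finSuccEquiv_linearSubst_transvection c ((finSuccEquiv A 1).symm p)
    rw [AlgEquiv.apply_symm_apply] at hT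
    rw [Subgroup.smul_def, gl_smul_def, hEapply, hEapply, ← hT, AlgEquiv.symm_apply_apply,
      ← AlgHom.comp_apply, ← AlgHom.comp_apply, ← linearSubst_mul, ← linearSubst_mul, hc]
  · exact AlgHom.commutes ((linearSubst M).comp (finSuccEquiv A 1).symm.toAlgHom) M.det
  · obtain ⟨k, p, hp⟩ := exists_linearSubst_eq_det_pow_smul M f
    exact ⟨k, finSuccEquiv A 1 p, by rw [hEapply, AlgEquiv.symm_apply_apply, hp]⟩

theorem isRegularRing_glInvariants_of_vecMul_eq [IsDedekindDomain A]
    {H : Subgroup (GL (Fin 2) A)} [Finite H] {v : Fin 2 → A} (hv : v ≠ 0)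
    (hdet : ∀ h ∈ H, (h : Matrix (Fin 2) (Fin 2) A).det = 1)
    (hfix : ∀ h ∈ H, v ᵥ* (h : Matrix (Fin 2) (Fin 2) A) = v) :
    IsRegularRing (glInvariants H) := by
  have := isNoetherianRing_glInvariants H
  refine isRegularRing_iff.2 fun Q _ ↦ ?_
  obtain ⟨a, b, w, i, ha, haw, hi⟩ := exists_smul_eq_smul_notMem hv
    (Ideal.comap_ne_top (algebraMap A (glInvariants H)) (Ideal.IsPrime.ne_top ‹_› : Q ≠ ⊤))
  have hw (h) (hh : h ∈ H) : w ᵥ* (h : Matrix (Fin 2) (Fin 2) A) = w := by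
    refine smul_right_injective _ ha ?_
    simp only [← smul_vecMul, haw]
    rw [smul_vecMul, hfix h hh]
  obtain ⟨r, hr⟩ : ∃ r, algebraMap A (glInvariants H) (of ![r, w]).det ∉ Q := by
    fin_cases i
    · exact ⟨![0, -1], by simpa [det_fin_two] using hi⟩
    · exact ⟨![1, 0], by simpa [det_fin_two] using hi⟩
  have hM : (of ![(of ![r, w]).det • r, w]).det = (of ![r, w]).det ^ 2 := by
    simp only [det_fin_two, of_apply, cons_val', cons_val_zero, cons_val_one, Pi.smul_apply,
      smul_eq_mul]
    ring
  refine isRegularLocalRing_localization_of_forall_mul_eq_transvection_mul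
    (fun h hh ↦ exists_mul_eq_transvection_mul (hdet h hh) (hw h hh) r) Q ?_
  rw [hM, map_pow]
  exact fun h ↦ hr (Ideal.IsPrime.mem_of_pow_mem ‹_› 2 h)

end FixedVector

section Sylow

open MvPolynomial Matrix

theorem exists_ne_zero_forall_smul_eq_of_isPGroup {p : ℕ} [Fact p.Prime] {H M : Type*} [Group H]
    [Finite H] (hH : IsPGroup p H) [AddCommGroup M] [Nontrivial M] [DistribMulAction H M]
    (hp : ∀ x : M, p • x = 0) : ∃ x : M, x ≠ 0 ∧ ∀ h : H, h • x = x := by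
  obtain ⟨x, hx⟩ := exists_ne (0 : M)
  let W : AddSubgroup M := .closure (Set.range fun h : H ↦ h • x)
  have hstable (h : H) : W ≤ W.comap (DistribSMul.toAddMonoidHom M h) := by
    refine (AddSubgroup.closure_le _).2 ?_
    rintro _ ⟨k, rfl⟩
    exact AddSubgroup.subset_closure ⟨h * k, mul_smul h k x⟩
  let orbitSpan : SubMulAction H M := ⟨W.carrier, fun h _ hw ↦ hstable h hw⟩
  have hxW : x ∈ W := AddSubgroup.subset_closure ⟨1, one_smul H x⟩
  have : Finite W := by
    have : AddGroup.FG W := AddGroup.closure_finite_fg _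
    exact AddCommGroup.finite_of_fg_isAddTorsion W fun w ↦
      isOfFinAddOrder_iff_nsmul_eq_zero.2 ⟨p, Nat.Prime.pos Fact.out, Subtype.ext (hp w)⟩
  have hdvd : p ∣ Nat.card W := by
    have hord : addOrderOf (⟨x, hxW⟩ : W) = p :=
      addOrderOf_eq_prime (Subtype.ext (hp x)) fun h ↦ hx (congrArg Subtype.val h)
    exact hord ▸ addOrderOf_dvd_natCard _
  have : Finite orbitSpan := ‹Finite W›
  obtain ⟨b, hb, hb0⟩ := hH.exists_fixed_point_of_prime_dvd_card_of_fixed_point orbitSpan hdvd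
    (a := ⟨0, W.zero_mem⟩) fun h ↦ Subtype.ext (smul_zero h)
  exact ⟨b, fun h ↦ hb0 (Subtype.ext h.symm), fun h ↦ congrArg Subtype.val (hb h)⟩

variable {A : Type*} [CommRing A] {p : ℕ} [Fact p.Prime] [CharP A p] {n : Type*} [Fintype n]
  [DecidableEq n] {H : Subgroup (GL n A)}

theorem exists_ne_zero_forall_vecMul_eq_of_isPGroup [Nonempty n] [Finite H] (hH : IsPGroup p H) :
    ∃ v : n → A, v ≠ 0 ∧ ∀ h ∈ H, v ᵥ* (h : Matrix n n A) = v := by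
  have : Nontrivial A := CharP.nontrivial_of_char_ne_one (Nat.Prime.ne_one Fact.out : p ≠ 1)
  let _ : DistribMulAction H (n → A) :=
    { smul h v := v ᵥ* (h⁻¹ : GL n A).1
      one_smul v := by
        change v ᵥ* (((1 : H) : GL n A)⁻¹).1 = v
        simp
      mul_smul g h v := by
        change v ᵥ* (((g * h : H) : GL n A)⁻¹).1 = (v ᵥ* (h⁻¹ : GL n A).1) ᵥ* (g⁻¹ : GL n A).1
        rw [vecMul_vecMul, Subgroup.coe_mul, _root_.mul_inv_rev, Units.val_mul]
      smul_zero h := zero_vecMul _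
      smul_add h v w := add_vecMul _ v w }
  obtain ⟨v, hv, hfix⟩ := exists_ne_zero_forall_smul_eq_of_isPGroup hH
    fun v : n → A ↦ funext fun i ↦ by simp
  refine ⟨v, hv, fun h hh ↦ ?_⟩
  have hinv : v ᵥ* (h⁻¹⁻¹ : GL n A).1 = v := hfix ⟨h⁻¹, inv_mem hh⟩
  rwa [inv_inv] at hinv

theorem det_eq_one_of_isPGroup [IsReduced A] (hH : IsPGroup p H) {h : GL n A} (hh : h ∈ H) :
    (h : Matrix n n A).det = 1 := by
  obtain ⟨k, hk⟩ := hH ⟨h, hh⟩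
  have hpow : (h : Matrix n n A) ^ p ^ k = 1 := by
    simpa [Subtype.ext_iff, Units.ext_iff] using hk
  have hdet : (h : Matrix n n A).det ^ (p ^ k * 1) = 1 := by
    rw [mul_one, ← det_pow, hpow, det_one]
  simpa using (ExpChar.pow_prime_pow_mul_eq_one_iff p k 1 _).1 hdet

theorem exists_le_isUnit_relIndex_and_isRegularRing_glInvariants (k : Type*) [Field k]
    {A : Type*} [CommRing A] [IsDedekindDomain A] [Algebra k A] (G : Subgroup (GL (Fin 2) A))
    [Finite G] : ∃ H ≤ G, IsUnit (H.relIndex G : A) ∧ IsRegularRing (glInvariants H) := by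
  have hunit {m : ℕ} (hm : (m : k) ≠ 0) : IsUnit (m : A) := by
    simpa using hm.isUnit.map (algebraMap k A)
  obtain ⟨p, _⟩ := CharP.exists k
  obtain hprime | rfl := CharP.char_is_prime_or_zero k p
  · have : Fact p.Prime := ⟨hprime⟩
    have : CharP A p := charP_of_injective_algebraMap (algebraMap k A).injective p
    let P : Sylow p G := default
    have hP : IsPGroup p ((P : Subgroup G).map G.subtype) := P.isPGroup'.map G.subtype
    have hPG : (P : Subgroup G).map G.subtype ≤ G := Subgroup.map_subtype_le _
    have := Finite.of_injective _ (Subgroup.inclusion_injective hPG)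
    obtain ⟨v, hv, hfix⟩ := exists_ne_zero_forall_vecMul_eq_of_isPGroup hP
    refine ⟨_, hPG, hunit ?_, isRegularRing_glInvariants_of_vecMul_eq hv
      (fun h hh ↦ det_eq_one_of_isPGroup hP hh) hfix⟩
    rw [Ne, CharP.cast_eq_zero_iff k p, Subgroup.relIndex, Subgroup.subgroupOf,
      Subgroup.comap_map_eq_self_of_injective G.subtype_injective]
    exact P.not_dvd_index
  · have := CharP.charP_to_charZero k
    refine ⟨⊥, bot_le, hunit ?_, isRegularRing_glInvariants_of_vecMul_eq (v := ![1, 0])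
      (by simp) (by simp) (by simp)⟩
    rw [Subgroup.relIndex_bot_left]
    exact_mod_cast Nat.card_pos.ne'

theorem equichar_invariants_cohenMacaulay_general (k : Type*) [Field k] {A : Type*} [CommRing A]
    [IsDedekindDomain A] [Algebra k A] (G : Subgroup (GL (Fin 2) A)) [Finite G] :
    IsCohenMacaulayRing (glInvariants G) := by
  obtain ⟨H, hHG, hunit, _⟩ := exists_le_isUnit_relIndex_and_isRegularRing_glInvariants k G
  exact isCohenMacaulayRing_glInvariants_of_isUnit_relIndex hHG hunit
    (isCohenMacaulayRing_of_isRegularRing _)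

end Sylow

section IntegralClosure

open Polynomial

variable {R : Type*} [CommRing R] {p : ℕ} [ExpChar R p]

theorem finite_frobenius_of_finiteType_intCast (hR : (Int.castRingHom R).FiniteType) :
    (frobenius R p).Finite := by
  refine RingHom.IsIntegral.to_finite (fun x ↦ ?_) ?_
  · exact ⟨X ^ p - C x, monic_X_pow_sub_C x (expChar_pos R p).ne', by simp [frobenius_def]⟩
  · have hcomp : (frobenius R p).comp (Int.castRingHom R) = Int.castRingHom R :=
      RingHom.ext_int _ _
    exact RingHom.FiniteType.of_comp_finiteType (hcomp.symm ▸ hR)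

theorem finite_iterateFrobenius (hR : (frobenius R p).Finite) (n : ℕ) :
    (iterateFrobenius R p n).Finite := by
  induction n with
  | zero => exact iterateFrobenius_zero R p ▸ RingHom.Finite.id R
  | succ n ih =>
    have hsucc : iterateFrobenius R p (n + 1) = (iterateFrobenius R p n).comp (frobenius R p) :=
      RingHom.ext fun x ↦ by simp [iterateFrobenius_def, frobenius_def, ← pow_mul, pow_succ']
    exact hsucc ▸ ih.comp hR

theorem finite_of_finite_comp_algebraMap {S B : Type*} [IsNoetherianRing R] [CommRing S]
    [CommRing B] [Algebra R S] {g : S →+* B} (hg : Function.Injective g)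
    (h : (g.comp (algebraMap R S)).Finite) : Module.Finite R S := by
  let _ := (g.comp (algebraMap R S)).toAlgebra
  have : Module.Finite R B := h
  exact .of_injective (AlgHom.mk g fun _ ↦ rfl : S →ₐ[R] B).toLinearMap hg

-- A power of Frobenius embeds `integralClosure R K` into the integral closure of `R` in the
-- separable closure of `F` in `K`, which is finite over `R` by the trace form.
theorem finite_integralClosure_of_finite_frobenius [IsDomain R] [IsNoetherianRing R]
    [IsIntegrallyClosed R]
    (F K : Type*) [Field F] [Algebra R F] [IsFractionRing R F] [Field K] [Algebra R K]
    [Algebra F K] [IsScalarTower R F K] [FiniteDimensional F K]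
    (hR : (frobenius R p).Finite) : Module.Finite R (integralClosure R K) := by
  let E := separableClosure F K
  have : ExpChar F p := expChar_of_injective_ringHom (IsFractionRing.injective R F) p
  have : ExpChar E p := expChar_of_injective_ringHom (algebraMap F E).injective p
  have : ExpChar K p := expChar_of_injective_ringHom (algebraMap F K).injective p
  have : IsScalarTower R E K := .of_algebraMap_eq fun x ↦ by
    rw [IsScalarTower.algebraMap_apply R F K, IsScalarTower.algebraMap_apply F E K,
      ← IsScalarTower.algebraMap_apply R F E]
  have : Module.Finite R (integralClosure R E) := IsIntegralClosure.finite R F E _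
  let n := IsPurelyInseparable.exponent E K
  let frob : K →+* E := IsPurelyInseparable.iterateFrobenius E K p (le_refl n)
  have hfrob (x : K) : algebraMap E K (frob x) = x ^ p ^ n :=
    IsPurelyInseparable.algebraMap_iterateFrobenius E p (le_refl n) x
  have hint (x : integralClosure R K) : frob x ∈ integralClosure R E := by
    refine (isIntegral_algebraMap_iff (algebraMap E K).injective).1 ?_
    rw [hfrob]
    exact x.2.pow _
  let g : integralClosure R K →+* integralClosure R E :=
    (frob.comp (algebraMap (integralClosure R K) K)).codRestrict (integralClosure R E) hint
  have hg : Function.Injective g :=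
    RingHom.injective_codRestrict.2 (frob.injective.comp Subtype.val_injective)
  have hcomp : g.comp (algebraMap R (integralClosure R K)) =
      (algebraMap R (integralClosure R E)).comp (iterateFrobenius R p n) := by
    refine RingHom.ext fun x ↦ Subtype.ext ((algebraMap E K).injective ?_)
    change algebraMap E K (frob (algebraMap R K x)) =
      algebraMap E K (algebraMap R E (x ^ p ^ n))
    rw [hfrob, ← IsScalarTower.algebraMap_apply, map_pow]
  refine finite_of_finite_comp_algebraMap hg (hcomp ▸ ?_)
  exact (RingHom.finite_algebraMap.2 inferInstance).comp (finite_iterateFrobenius hR n)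

theorem isDedekindDomain_integralClosure_of_finite_frobenius [IsDedekindDomain R]
    (F K : Type*) [Field F] [Algebra R F] [IsFractionRing R F] [Field K] [Algebra R K]
    [Algebra F K] [IsScalarTower R F K] [FiniteDimensional F K]
    (hR : (frobenius R p).Finite) : IsDedekindDomain (integralClosure R K) := by
  have := finite_integralClosure_of_finite_frobenius F K hR
  have : IsNoetherianRing (integralClosure R K) := .of_finite R _
  have := integralClosure.isIntegrallyClosedOfFiniteExtension F (R := R) (L := K)
  have : Ring.DimensionLEOne (integralClosure R K) := .of_isIntegral R _
  have : IsDedekindRing (integralClosure R K) := { }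
  exact {}

theorem isDedekindDomain_ringOfIntegers (Fq K : Type*) [Field Fq] [Finite Fq] [Field K]
    [Algebra Fq[X] K] [Algebra (RatFunc Fq) K]
    [IsScalarTower Fq[X] (RatFunc Fq) K] [FunctionField Fq K] :
    IsDedekindDomain (FunctionField.ringOfIntegers Fq K) := by
  have : FiniteDimensional (RatFunc Fq) K := ‹FunctionField Fq K›
  obtain ⟨p, _⟩ := ExpChar.exists Fq
  have : ExpChar Fq[X] p := expChar_of_injective_ringHom C_injective p
  have : Module.Finite ℤ Fq := .of_finite
  have hfg : (Int.castRingHom Fq[X]).FiniteType := by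
    have : Module.Finite ℤ Fq := .of_finite
    rw [RingHom.ext_int (Int.castRingHom Fq[X]) (algebraMap ℤ Fq[X]),
      RingHom.finiteType_algebraMap]
    exact .trans (S := Fq) inferInstance inferInstance
  exact isDedekindDomain_integralClosure_of_finite_frobenius (RatFunc Fq) K
    (finite_frobenius_of_finiteType_intCast (p := p) hfg)

end IntegralClosure

/-- **Equicharacteristic case.** Let `A` be the ring of integers of a global function field,
i.e. the integral closure of `F_q[t]` in a finite field extension `K` of `F_q(t)`, where
`F_q` is a finite field. Let `G ⊆ GL_2(A)` be a finite group acting linearly on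
`R = A[X, Y]` (fixing `A`). Then the ring of invariants `R^G` is Cohen–Macaulay. -/
theorem equichar_invariants_cohenMacaulay
    (Fq K : Type) [Field Fq] [Finite Fq] [Field K]
    [Algebra (Polynomial Fq) K] [Algebra (RatFunc Fq) K]
    [IsScalarTower (Polynomial Fq) (RatFunc Fq) K]
    [FunctionField Fq K]
    (G : Subgroup (Matrix.GeneralLinearGroup (Fin 2)
      ↥(FunctionField.ringOfIntegers Fq K))) [Finite ↥G] :
    IsCohenMacaulayRing ↥(glInvariants G) := by
  have := isDedekindDomain_ringOfIntegers Fq K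
  let _ : Algebra Fq (FunctionField.ringOfIntegers Fq K) :=
    ((algebraMap (Polynomial Fq) _).comp Polynomial.C).toAlgebra
  exact equichar_invariants_cohenMacaulay_general Fq G
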